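/- Let R = K[x_1,x_2,x_3,y_1,y_2,y_3] over a field K and let I = ⟨x_1x_2, x_2x_3, x_1x_3, x_1y_1, x_2y_2, x_3y_3⟩ (the edge ideal of the triangle with a whisker at each vertex). Then I^{[2]} = ⟨x_1y_1x_3y_3, x_1y_1x_2x_3, x_1y_1x_2y_2, x_3y_3x_2y_2, x_3y_3x_1x_2, x_2y_2x_1x_3⟩, both ⟨x_1,x_2⟩ and ⟨y_1,y_2,y_3⟩ are minimal primes of I^{[2]}, so I^{[2]} is not unmixed and R/I^{[2]} is not Cohen-Macaulay. -/

import Mathlib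

open MvPolynomial

/-- A simplicial complex on the vertex set `V`, presented by its set of facets
(the maximal faces).  Every facet is nonempty and no facet contains another. -/
structure SimplicialComplexOn (V : Type) [Fintype V] [DecidableEq V] : Type where
  facets : Finset (Finset V)
  nonempty_facet : ∀ F ∈ facets, F.Nonempty
  antichain : ∀ F ∈ facets, ∀ G ∈ facets, F ⊆ G → F = G

variable {V : Type} [Fintype V] [DecidableEq V]

/-- `F` is a leaf of the collection of facets `S`: either `F` is the only facet, or
there is a facet `G ≠ F` (a joint) with `F ∩ H ⊆ F ∩ G` for every facet `H ≠ F`. -/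
def IsLeafOf (S : Finset (Finset V)) (F : Finset V) : Prop :=
  F ∈ S ∧ ((∀ H ∈ S, H = F) ∨
    ∃ G ∈ S, G ≠ F ∧ ∀ H ∈ S, H ≠ F → F ∩ H ⊆ F ∩ G)

/-- The forest property for a facet collection: every nonempty subcollection
(i.e. every nonempty subcomplex) has a leaf. -/
def HasLeafProp (S : Finset (Finset V)) : Prop :=
  ∀ T ⊆ S, T.Nonempty → ∃ F, IsLeafOf T F

/-- A good leaf: a facet which is a leaf of every subcomplex containing it. -/
def IsGoodLeafOf (S : Finset (Finset V)) (F : Finset V) : Prop :=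
  F ∈ S ∧ ∀ T ⊆ S, F ∈ T → IsLeafOf T F

/-- A special leaf: a leaf `F` such that for all facets `H, H' ≠ F`,
`H ∩ H' ≠ ∅` iff `(H ∩ H') \ F ≠ ∅`. -/
def IsSpecialLeafOf (S : Finset (Finset V)) (F : Finset V) : Prop :=
  IsLeafOf S F ∧ ∀ H ∈ S, ∀ H' ∈ S, H ≠ F → H' ≠ F →
    ((H ∩ H').Nonempty ↔ ((H ∩ H') \ F).Nonempty)

/-- A matching: a subcollection of the facets that is pairwise disjoint. -/
def IsMatchingOf (S : Finset (Finset V)) (M : Finset (Finset V)) : Prop :=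
  M ⊆ S ∧ ∀ F ∈ M, ∀ G ∈ M, F ≠ G → F ∩ G = ∅

/-- The matching number: maximum size of a matching. -/
noncomputable def matchingNumberOf (S : Finset (Finset V)) : ℕ :=
  sSup {n | ∃ M : Finset (Finset V), IsMatchingOf S M ∧ M.card = n}

/-- The facet collection `S` is grafted: it decomposes as `Fs ∪ Gs` where
(1) every vertex of a `G ∈ Gs` lies in some `F ∈ Fs`, (2) `Fs` is exactly the set
of leaves of `S`, (3) `Fs` and `Gs` are disjoint, (4) the members of `Fs` are
pairwise disjoint, and (5) for each `G ∈ Gs`, deleting the facet `G` leaves a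
grafted collection. -/
inductive IsGrafted : Finset (Finset V) → Prop where
  | intro (S Fs Gs : Finset (Finset V))
      (hunion : S = Fs ∪ Gs)
      (hdisj : Disjoint Fs Gs)
      (hcover : ∀ G ∈ Gs, ∀ v ∈ G, ∃ F ∈ Fs, v ∈ F)
      (hleaves : ∀ F, IsLeafOf S F ↔ F ∈ Fs)
      (hFdisj : ∀ F ∈ Fs, ∀ F' ∈ Fs, F ≠ F' → F ∩ F' = ∅)
      (hrec : ∀ G ∈ Gs, IsGrafted (S.erase G)) :
      IsGrafted S

/-- `S` is the (minimal presentation of the) grafting of the collection `Gs`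
with the simplices `Fs`. -/
def IsGraftingDecomp (S Fs Gs : Finset (Finset V)) : Prop :=
  S = Fs ∪ Gs ∧ Disjoint Fs Gs ∧
  (∀ G ∈ Gs, ∀ v ∈ G, ∃ F ∈ Fs, v ∈ F) ∧
  (∀ F, IsLeafOf S F ↔ F ∈ Fs) ∧
  (∀ F ∈ Fs, ∀ F' ∈ Fs, F ≠ F' → F ∩ F' = ∅) ∧
  (∀ G ∈ Gs, IsGrafted (S.erase G))

/-- A Cohen-Macaulay simplicial forest, combinatorially: a grafted simplicial forest. -/
def IsCMForestFacets (S : Finset (Finset V)) : Prop :=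
  HasLeafProp S ∧ IsGrafted S

/-- The closed neighborhood `N[F] = {F} ∪ {G ∈ S : G ≠ F, G ∩ F ≠ ∅}`. -/
def closedNbhd (S : Finset (Finset V)) (F : Finset V) : Finset (Finset V) :=
  insert F (S.filter fun G => G ≠ F ∧ (G ∩ F).Nonempty)

/-- The contraction of the facet collection `S` on `A`: the minimal members of
`{F \ A : F ∈ S}`. -/
def contraction (S : Finset (Finset V)) (A : Finset V) : Finset (Finset V) :=
  (S.image fun F => F \ A).filter fun F' => ∀ G ∈ S, G \ A ⊆ F' → G \ A = F'

variable (K : Type) [Field K]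

/-- The square-free monomial `x_S = ∏_{v ∈ S} x_v`. -/
noncomputable def xMon (S : Finset V) : MvPolynomial V K := ∏ v ∈ S, X v

/-- The facet ideal `I(Δ) = ⟨x_F : F a facet⟩`. -/
noncomputable def facetIdealOf (S : Finset (Finset V)) : Ideal (MvPolynomial V K) :=
  Ideal.span { p | ∃ F ∈ S, p = xMon K F }

/-- The `k`-th square-free power of an ideal: the ideal generated by all
square-free monomials lying in `I ^ k`. -/
noncomputable def sqfreePow (I : Ideal (MvPolynomial V K)) (k : ℕ) :
    Ideal (MvPolynomial V K) :=
  Ideal.span { p | (∃ S : Finset V, p = xMon K S) ∧ p ∈ I ^ k }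

/-- The depth of `R/I` with respect to the homogeneous maximal ideal
`m = ⟨x_v : v ∈ V⟩`: the largest length of an `R/I`-regular sequence of
elements of `m`. -/
noncomputable def gradedDepth (I : Ideal (MvPolynomial V K)) : ℕ :=
  sSup {n | ∃ rs : List (MvPolynomial V K), rs.length = n ∧
    (∀ r ∈ rs, r ∈ Ideal.span (Set.range (X : V → MvPolynomial V K))) ∧
    RingTheory.Sequence.IsRegular (MvPolynomial V K ⧸ I) rs}

/-- `R/I` is Cohen-Macaulay: its depth equals its Krull dimension. -/
def IsCMQuot (I : Ideal (MvPolynomial V K)) : Prop :=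
  ((gradedDepth K I : ℕ∞) : WithBot ℕ∞) = ringKrullDim (MvPolynomial V K ⧸ I)

section Statements

variable {V : Type} [Fintype V] [DecidableEq V] (K : Type) [Field K]

/-- An ideal is unmixed if all its minimal primes have the same height. -/
def Unmixed {R : Type*} [CommRing R] (I : Ideal R) : Prop :=
  ∀ p q : PrimeSpectrum R, p.asIdeal ∈ I.minimalPrimes → q.asIdeal ∈ I.minimalPrimes →
    Order.height p = Order.height q

/-!
The square-free monomials in `I(S) ^ k` are the multiples of the products over the matchings of
size `k` in `S`: a product of facet monomials dividing a square-free monomial has pairwise disjoint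
factors. Hence `I(S)^{[k]}` is again a facet ideal, and the minimal primes of a facet ideal are
generated by the minimal vertex covers. For the whiskered triangle and `k = 2`, the minimal covers
`{x₁, x₂}` and `{y₁, y₂, y₃}` have different sizes, so the ideal is not unmixed.

The depth of `R/I` is at most `dim R/p` for every associated prime `p` inside the maximal ideal:
killing a regular element `r` of the maximal ideal replaces `p` by an associated prime of the
quotient containing both `p` and `r`, which lowers the dimension. So if `R/I(S)` is Cohen-Macaulay,
then `dim R/P_C = dim R/I(S)` for every minimal vertex cover `C`, and all these covers have the same
size.
-/

section Depth

variable {R M : Type*} [CommRing R] [AddCommGroup M] [Module R M]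

theorem quotSMulTop_map_torsionBySet_subtype_injective {r : R} (hr : IsSMulRegular M r)
    (s : Set R) :
    Function.Injective (QuotSMulTop.map r (Submodule.torsionBySet R M s).subtype) := by
  rw [injective_iff_map_eq_zero]
  intro x hx
  obtain ⟨n, rfl⟩ := Submodule.Quotient.mk_surjective _ x
  rw [QuotSMulTop.map_apply_mk, Submodule.Quotient.mk_eq_zero,
    Submodule.mem_smul_pointwise_iff_exists] at hx
  obtain ⟨z, -, hz⟩ := hx
  have hzs : z ∈ Submodule.torsionBySet R M s := by
    rw [Submodule.mem_torsionBySet_iff]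
    intro a
    refine hr.right_eq_zero_of_smul ?_
    rw [smul_comm, hz]
    exact (Submodule.mem_torsionBySet_iff s _).1 n.2 a
  rw [Submodule.Quotient.mk_eq_zero, Submodule.mem_smul_pointwise_iff_exists]
  exact ⟨⟨z, hzs⟩, Submodule.mem_top, Subtype.ext hz⟩

theorem le_annihilator_torsionBySet (p : Ideal R) :
    p ≤ Module.annihilator R (Submodule.torsionBySet R M (p : Set R)) := fun a ha ↦
  Module.mem_annihilator.2 fun n ↦
    Subtype.ext ((Submodule.mem_torsionBySet_iff _ _).1 n.2 ⟨a, ha⟩)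

theorem ringKrullDim_quotient_add_one_le_of_lt {p q : Ideal R} [p.IsPrime] (hpq : p < q) :
    ringKrullDim (R ⧸ q) + 1 ≤ ringKrullDim (R ⧸ p) := by
  obtain ⟨r, hrq, hrp⟩ := SetLike.exists_of_lt hpq
  refine ringKrullDim_succ_le_of_surjective (Ideal.Quotient.factor hpq.le)
    (Ideal.Quotient.factor_surjective hpq.le) (r := Ideal.Quotient.mk p r)
    (mem_nonZeroDivisors_of_ne_zero ?_) ?_
  · rwa [Ne, Ideal.Quotient.eq_zero_iff_mem]
  · rwa [Ideal.Quotient.factor_mk, Ideal.Quotient.eq_zero_iff_mem]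

theorem mem_annihilator_quotSMulTop (r : R) : r ∈ Module.annihilator R (QuotSMulTop r M) := by
  refine Module.mem_annihilator.2 fun x ↦ ?_
  obtain ⟨n, rfl⟩ := Submodule.Quotient.mk_surjective _ x
  rw [← Submodule.Quotient.mk_smul, Submodule.Quotient.mk_eq_zero]
  exact Submodule.smul_mem_pointwise_smul n r ⊤ Submodule.mem_top

variable [IsNoetherianRing R]

theorem notMem_of_mem_associatedPrimes_of_isSMulRegular {r : R} (hr : IsSMulRegular M r)
    {p : Ideal R} (hp : p ∈ associatedPrimes R M) : r ∉ p := fun hrp ↦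
  (biUnion_associatedPrimes_eq_compl_regular R M).subset (Set.mem_biUnion hp hrp) hr

variable [Module.Finite R M]

theorem mem_support_torsionBySet_of_mem_associatedPrimes {p : Ideal R}
    (hp : p ∈ associatedPrimes R M) {m : PrimeSpectrum R} (hpm : p ≤ m.asIdeal) :
    m ∈ Module.support R (Submodule.torsionBySet R M (p : Set R)) := by
  obtain ⟨-, x, hx⟩ := isAssociatedPrime_iff.1 hp
  have hp_iff (a : R) : a ∈ p ↔ a • x = 0 := by
    rw [hx, Submodule.mem_colon_singleton, Submodule.mem_bot]
  have hx_mem : x ∈ Submodule.torsionBySet R M (p : Set R) :=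
    (Submodule.mem_torsionBySet_iff _ _).2 fun a ↦ (hp_iff a).1 a.2
  rw [Module.mem_support_iff_of_finite]
  intro a ha
  have hax : a • (⟨x, hx_mem⟩ : Submodule.torsionBySet R M (p : Set R)) = 0 :=
    Module.mem_annihilator.1 ha _
  exact hpm ((hp_iff a).2 (congrArg Subtype.val hax))

theorem exists_mem_associatedPrimes_le_of_mem_support {m : PrimeSpectrum R}
    (hm : m ∈ Module.support R M) :
    ∃ q ∈ associatedPrimes R M, Module.annihilator R M ≤ q ∧ q ≤ m.asIdeal := by
  obtain ⟨q, hq, hqm⟩ := Ideal.exists_minimalPrimes_le (Module.mem_support_iff_of_finite.1 hm)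
  exact ⟨q, Module.associatedPrimes.minimalPrimes_annihilator_subset_associatedPrimes R M hq,
    hq.1.2, hqm⟩

theorem exists_mem_associatedPrimes_quotSMulTop {r : R} (hr : IsSMulRegular M r)
    {p m : Ideal R} [m.IsPrime] (hp : p ∈ associatedPrimes R M) (hpm : p ≤ m) (hrm : r ∈ m) :
    ∃ q ∈ associatedPrimes R (QuotSMulTop r M), p ≤ q ∧ r ∈ q ∧ q ≤ m := by
  let N := Submodule.torsionBySet R M (p : Set R)
  have hm : ⟨m, ‹_›⟩ ∈ Module.support R (QuotSMulTop r N) := by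
    rw [Module.support_quotSMulTop]
    exact ⟨mem_support_torsionBySet_of_mem_associatedPrimes hp hpm, by simpa using hrm⟩
  obtain ⟨q, hq, hann, hqm⟩ := exists_mem_associatedPrimes_le_of_mem_support hm
  have hpq : p ≤ q := (le_annihilator_torsionBySet p).trans <|
    (LinearMap.annihilator_le_of_surjective _ (Submodule.mkQ_surjective _)).trans hann
  have hrq : r ∈ q := hann (mem_annihilator_quotSMulTop r)
  exact ⟨q, hq.map_of_injective _ (quotSMulTop_map_torsionBySet_subtype_injective hr _),
    hpq, hrq, hqm⟩

theorem length_le_ringKrullDim_quotient_of_isWeaklyRegular {rs : List R}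
    (hreg : RingTheory.Sequence.IsWeaklyRegular M rs) {p m : Ideal R} [m.IsPrime]
    (hp : p ∈ associatedPrimes R M) (hpm : p ≤ m) (hrs : ∀ r ∈ rs, r ∈ m) :
    (rs.length : WithBot ℕ∞) ≤ ringKrullDim (R ⧸ p) := by
  have := hp.isPrime
  induction rs generalizing M p with
  | nil => simpa using ringKrullDim_nonneg_of_nontrivial
  | cons r rs ih =>
    obtain ⟨hr, hreg⟩ := (RingTheory.Sequence.isWeaklyRegular_cons_iff M r rs).1 hreg
    obtain ⟨hrm, hrsm⟩ := List.forall_mem_cons.1 hrs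
    obtain ⟨q, hq, hpq, hrq, hqm⟩ := exists_mem_associatedPrimes_quotSMulTop hr hp hpm hrm
    have hlt : p < q := lt_of_le_of_ne hpq fun h ↦
      notMem_of_mem_associatedPrimes_of_isSMulRegular hr hp (h ▸ hrq)
    calc ((r :: rs).length : WithBot ℕ∞) = rs.length + 1 := by simp
      _ ≤ ringKrullDim (R ⧸ q) + 1 := by
        gcongr
        exact ih hreg hq hqm hrsm hq.isPrime
      _ ≤ ringKrullDim (R ⧸ p) := ringKrullDim_quotient_add_one_le_of_lt hlt

end Depth

section VariableIdeals

variable {σ : Type*} (R : Type*)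

theorem ker_killCompl [CommSemiring R] {τ : Type*} {f : σ → τ} (hf : Function.Injective f) :
    RingHom.ker (killCompl hf : MvPolynomial τ R →ₐ[R] MvPolynomial σ R) =
      Ideal.span (X '' (Set.range f)ᶜ) := by
  refine le_antisymm (fun p hp ↦ ?_) ?_
  · rw [mem_ideal_span_X_image]
    intro m hm
    by_contra! hm_range
    have hm_supp : (m.support : Set τ) ⊆ Set.range f := fun i hi ↦ by
      by_contra hi_range
      exact Finsupp.mem_support_iff.1 hi (hm_range i hi_range)
    have hcoeff := congrArg (coeff (m.comapDomain f hf.injOn)) (RingHom.mem_ker.1 hp)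
    rw [coeff_killCompl, Finsupp.mapDomain_comapDomain f hf m hm_supp, coeff_zero] at hcoeff
    exact mem_support_iff.1 hm hcoeff
  · rw [Ideal.span_le]
    rintro _ ⟨i, hi, rfl⟩
    simp [RingHom.mem_ker, killCompl, dif_neg hi]

variable [CommRing R]

/-- The ideal `P_s = ⟨x_i : i ∈ s⟩` generated by a set of variables.  It is reducible so that the
library lemmas on spans of variables apply to it. -/
noncomputable abbrev varsIdeal (s : Set σ) : Ideal (MvPolynomial σ R) := Ideal.span (X '' s)

/-- `R[σ] / P_s` is the polynomial ring in the variables outside `s`. -/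
noncomputable def quotientVarsIdealEquiv (s : Set σ) :
    (MvPolynomial σ R ⧸ varsIdeal R s) ≃ₐ[R] MvPolynomial ↥sᶜ R :=
  have hker : varsIdeal R s =
      RingHom.ker (killCompl (R := R) (Subtype.val_injective (p := sᶜ))) := by
    rw [ker_killCompl, Subtype.range_val_subtype, varsIdeal]
    exact congrArg _ (congrArg _ (compl_compl s).symm)
  (Ideal.quotientEquivAlgOfEq R hker).trans
    (Ideal.quotientKerAlgEquivOfSurjective
      (Function.LeftInverse.surjective (killCompl_rename_app Subtype.val_injective)))

instance isPrime_varsIdeal [IsDomain R] (s : Set σ) : (varsIdeal R s).IsPrime := by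
  rw [← Ideal.Quotient.isDomain_iff_prime]
  exact (quotientVarsIdealEquiv R s).toMulEquiv.isDomain

variable {R} in
theorem X_mem_varsIdeal_iff [Nontrivial R] {s : Set σ} {i : σ} : X i ∈ varsIdeal R s ↔ i ∈ s := by
  classical simp [mem_ideal_span_X_image, support_X, Finsupp.single_apply_ne_zero]

theorem ringKrullDim_quotient_varsIdeal [Finite σ] [IsNoetherianRing R] (s : Set σ) :
    ringKrullDim (MvPolynomial σ R ⧸ varsIdeal R s) = ringKrullDim R + sᶜ.ncard := by
  rw [ringKrullDim_eq_of_ringEquiv (quotientVarsIdealEquiv R s).toRingEquiv,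
    ringKrullDim_of_isNoetherianRing, Nat.card_coe_set_eq]

theorem height_varsIdeal_le [IsDomain R] [IsNoetherianRing R] [Finite σ] (s : Set σ) :
    (varsIdeal R s).height ≤ s.encard :=
  calc (varsIdeal R s).height
      ≤ (varsIdeal R s).spanFinrank := Ideal.height_le_spanFinrank _ Ideal.IsPrime.ne_top'
    _ ≤ (X '' s : Set (MvPolynomial σ R)).encard := Submodule.spanFinrank_span_le_encard _
    _ ≤ s.encard := Set.encard_image_le _ _

theorem le_height_varsIdeal [IsDomain R] (s : Finset σ) :
    (s.card : ℕ∞) ≤ (varsIdeal R (s : Set σ)).height := by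
  classical
  induction s using Finset.induction_on with
  | empty => simp
  | insert i s hi ih =>
    have hlt : varsIdeal R (s : Set σ) < varsIdeal R (insert i s : Finset σ) := by
      refine lt_of_le_of_ne (Ideal.span_mono (Set.image_mono (by simp))) fun h ↦ hi ?_
      have : X i ∈ varsIdeal R (s : Set σ) := h ▸ X_mem_varsIdeal_iff.2 (by simp)
      simpa using X_mem_varsIdeal_iff.1 this
    rw [Finset.card_insert_of_notMem hi, Nat.cast_succ]
    exact (add_le_add_left ih 1).trans (Ideal.height_add_one_le_of_lt_of_isPrime hlt)

theorem height_varsIdeal [IsDomain R] [IsNoetherianRing R] [Finite σ] (s : Set σ) :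
    (varsIdeal R s).height = s.encard := by
  refine (height_varsIdeal_le R s).antisymm ?_
  obtain ⟨s, rfl⟩ := s.toFinite.exists_finset_coe
  rw [Set.encard_coe_eq_coe_finsetCard]
  exact le_height_varsIdeal R s

end VariableIdeals

section GradedDepth

variable {σ : Type} [Finite σ] {K}

theorem gradedDepth_le_ringKrullDim_quotient {I p : Ideal (MvPolynomial σ K)}
    (hp : p ∈ associatedPrimes (MvPolynomial σ K) (MvPolynomial σ K ⧸ I))
    (hpm : p ≤ Ideal.span (Set.range X)) :
    ((gradedDepth K I : ℕ∞) : WithBot ℕ∞) ≤ ringKrullDim (MvPolynomial σ K ⧸ p) := by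
  have hm : (Ideal.span (Set.range X) : Ideal (MvPolynomial σ K)).IsPrime := by
    rw [← Set.image_univ]
    exact isPrime_varsIdeal K Set.univ
  have hlength {rs : List (MvPolynomial σ K)} (hrs : ∀ r ∈ rs, r ∈ Ideal.span (Set.range X))
      (hreg : RingTheory.Sequence.IsRegular (MvPolynomial σ K ⧸ I) rs) :
      (rs.length : WithBot ℕ∞) ≤ ringKrullDim (MvPolynomial σ K ⧸ p) :=
    length_le_ringKrullDim_quotient_of_isWeaklyRegular hreg.toIsWeaklyRegular hp hpm hrs
  have := hp.isPrime
  obtain ⟨d, hd⟩ : ∃ d : ℕ∞, d = ringKrullDim (MvPolynomial σ K ⧸ p) :=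
    WithBot.ne_bot_iff_exists.1 (Order.krullDim_ne_bot_iff.2 inferInstance)
  rw [← hd] at hlength ⊢
  cases d with
  | top => exact le_top
  | coe d =>
    have : gradedDepth K I ≤ d := csSup_le' <| by
      rintro _ ⟨rs, rfl, hrs, hreg⟩
      exact_mod_cast hlength hrs hreg
    exact_mod_cast this

end GradedDepth

section Monomials

variable {σ R : Type*}

theorem mem_span_iff_exists_dvd [CommSemiring R] [Nontrivial R] {A : Set (MvPolynomial σ R)}
    (hA : A ⊆ MonoidHom.mrange (monomialOneHom R σ)) {p : MvPolynomial σ R}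
    (hp : p ∈ MonoidHom.mrange (monomialOneHom R σ)) :
    p ∈ Ideal.span A ↔ ∃ a ∈ A, a ∣ p := by
  refine ⟨fun h ↦ ?_, fun ⟨a, ha, hap⟩ ↦ Ideal.mem_of_dvd _ hap (Ideal.subset_span ha)⟩
  obtain ⟨e, rfl⟩ := hp
  obtain ⟨E, rfl⟩ := Set.subset_range_iff_exists_image_eq.1 hA
  have hcoeff : coeff e.toAdd (monomialOneHom R σ e) = 1 := by
    classical exact (coeff_monomial e.toAdd e.toAdd 1).trans (if_pos rfl)
  obtain ⟨d, hd, hde⟩ := mem_ideal_span_monomial_image_iff_dvd.1 h e.toAdd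
    (mem_support_iff.2 (hcoeff ▸ one_ne_zero))
  rw [hcoeff] at hde
  exact ⟨_, ⟨d, hd, rfl⟩, hde⟩

theorem squarefree_prod_X [CommRing R] [IsDomain R] [UniqueFactorizationMonoid R] (s : Finset σ) :
    Squarefree (∏ i ∈ s, (X i : MvPolynomial σ R)) := by
  refine Finset.squarefree_prod_of_pairwise_isCoprime (fun i _ j _ hij ↦ ?_)
    fun i _ ↦ X_prime.irreducible.squarefree
  rw [Function.onFun, X_prime.irreducible.isRelPrime_iff_not_dvd, X_dvd_X]
  exact hij

end Monomials

section Matchings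

variable {σ : Type} {K}

theorem xMon_mem_mrange_monomialOneHom (F : Finset σ) :
    xMon K F ∈ MonoidHom.mrange (monomialOneHom K σ) :=
  prod_mem fun i _ ↦ ⟨Multiplicative.ofAdd (Finsupp.single i 1), rfl⟩

theorem X_dvd_xMon_iff {F : Finset σ} {i : σ} : X i ∣ xMon K F ↔ i ∈ F := by
  rw [xMon, X_prime.dvd_finsetProd_iff]
  simp [X_dvd_X]

theorem xMon_dvd_xMon {F G : Finset σ} (h : F ⊆ G) : xMon K F ∣ xMon K G :=
  Finset.prod_dvd_prod_of_subset _ _ _ h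

theorem disjoint_of_xMon_mul_xMon_dvd {F G T : Finset σ}
    (h : xMon K F * xMon K G ∣ xMon K T) : Disjoint F G := by
  rw [Finset.disjoint_left]
  intro i hF hG
  exact X_prime.not_isUnit <| squarefree_prod_X T _ <|
    (mul_dvd_mul (X_dvd_xMon_iff.2 hF) (X_dvd_xMon_iff.2 hG)).trans h

theorem facetIdealOf_eq_span_image (S : Finset (Finset σ)) :
    facetIdealOf K S = Ideal.span (xMon K '' S) := by
  simp only [facetIdealOf, Set.image, eq_comm, Finset.mem_coe]

open scoped Pointwise in
theorem xMon_mem_facetIdealOf_pow_iff_exists_dvd {S : Finset (Finset σ)} {k : ℕ} {T : Finset σ} :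
    xMon K T ∈ facetIdealOf K S ^ k ↔
      ∃ F : Fin k → Finset σ, (∀ j, F j ∈ S) ∧ ∏ j, xMon K (F j) ∣ xMon K T := by
  have hA : (xMon K '' (S : Set (Finset σ))) ^ k ⊆ MonoidHom.mrange (monomialOneHom K σ) :=
    Submonoid.pow_subset <| Set.image_subset_iff.2 fun F _ ↦ xMon_mem_mrange_monomialOneHom F
  rw [facetIdealOf_eq_span_image, Ideal.span, Submodule.span_pow, ← Ideal.span,
    mem_span_iff_exists_dvd hA (xMon_mem_mrange_monomialOneHom T)]
  constructor
  · rintro ⟨_, ha, hdvd⟩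
    obtain ⟨f, rfl⟩ := Set.mem_pow.1 ha
    choose F hFS hF using fun j ↦ (f j).2
    refine ⟨F, hFS, ?_⟩
    simpa only [hF, ← List.prod_ofFn] using hdvd
  · rintro ⟨F, hFS, hdvd⟩
    refine ⟨_, Set.mem_pow.2 ⟨fun j ↦ ⟨xMon K (F j), F j, hFS j, rfl⟩, rfl⟩, ?_⟩
    simpa only [List.prod_ofFn] using hdvd

variable [DecidableEq σ]

theorem prod_xMon_of_isMatchingOf {S M : Finset (Finset σ)} (hM : IsMatchingOf S M) :
    ∏ F ∈ M, xMon K F = xMon K (M.biUnion id) :=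
  (Finset.prod_biUnion fun F hF G hG hFG ↦
    Finset.disjoint_iff_inter_eq_empty.2 (hM.2 F hF G hG hFG)).symm

theorem isMatchingOf_image {ι : Type*} {S : Finset (Finset σ)} {s : Finset ι} {F : ι → Finset σ}
    (hFS : ∀ j ∈ s, F j ∈ S) (hF : (s : Set ι).Pairwise (Function.onFun Disjoint F)) :
    IsMatchingOf S (s.image F) := by
  refine ⟨Finset.image_subset_iff.2 hFS, ?_⟩
  simp only [Finset.forall_mem_image, ← Finset.disjoint_iff_inter_eq_empty]
  exact fun i hi j hj hij ↦ hF hi hj (ne_of_apply_ne F hij)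

theorem xMon_mem_facetIdealOf_pow_iff {S : Finset (Finset σ)} (hS : ∅ ∉ S) {k : ℕ}
    {T : Finset σ} :
    xMon K T ∈ facetIdealOf K S ^ k ↔
      ∃ M, IsMatchingOf S M ∧ M.card = k ∧ M.biUnion id ⊆ T := by
  rw [xMon_mem_facetIdealOf_pow_iff_exists_dvd]
  constructor
  · rintro ⟨F, hFS, hdvd⟩
    have hdisj : Pairwise (Function.onFun Disjoint F) := fun i j hij ↦ by
      refine disjoint_of_xMon_mul_xMon_dvd (K := K) (T := T) (dvd_trans ?_ hdvd)
      rw [← Finset.prod_pair (f := fun i ↦ xMon K (F i)) hij]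
      exact Finset.prod_dvd_prod_of_subset _ _ _ (Finset.subset_univ _)
    have hinj : Function.Injective F := fun i j hij ↦ by
      by_contra hne
      have hempty : F i = ∅ := disjoint_self.1 (by simpa only [Function.onFun, hij] using hdisj hne)
      exact hS (hempty ▸ hFS i)
    refine ⟨Finset.univ.image F, isMatchingOf_image (fun j _ ↦ hFS j) (hdisj.set_pairwise _),
      ?_, ?_⟩
    · rw [Finset.card_image_of_injective _ hinj, Finset.card_fin]
    · simp only [Finset.biUnion_subset, Finset.forall_mem_image, id]
      exact fun j hj v hv ↦ X_dvd_xMon_iff (K := K).1 <| (X_dvd_xMon_iff.2 hv).trans <|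
        (Finset.dvd_prod_of_mem _ hj).trans hdvd
  · rintro ⟨M, hM, rfl, hMT⟩
    refine ⟨fun j ↦ M.equivFin.symm j, fun j ↦ hM.1 (Subtype.prop _), ?_⟩
    rw [M.equivFin.symm.prod_comp (fun F : M ↦ xMon K (F : Finset σ)), Finset.prod_coe_sort,
      prod_xMon_of_isMatchingOf hM]
    exact xMon_dvd_xMon hMT

instance decidablePredIsMatchingOf (S : Finset (Finset σ)) : DecidablePred (IsMatchingOf S) :=
  fun M ↦ inferInstanceAs (Decidable (M ⊆ S ∧ ∀ F ∈ M, ∀ G ∈ M, F ≠ G → F ∩ G = ∅))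

/-- The facet collection of the `k`-th square-free power of `S`: the vertex sets of the matchings
of size `k`. -/
def matchingUnions (S : Finset (Finset σ)) (k : ℕ) : Finset (Finset σ) :=
  ((S.powersetCard k).filter (IsMatchingOf S)).image fun M ↦ M.biUnion id

theorem mem_matchingUnions {S : Finset (Finset σ)} {k : ℕ} {F : Finset σ} :
    F ∈ matchingUnions S k ↔ ∃ M, IsMatchingOf S M ∧ M.card = k ∧ M.biUnion id = F := by
  simp only [matchingUnions, Finset.mem_image, Finset.mem_filter, Finset.mem_powersetCard]
  exact exists_congr fun M ↦ ⟨fun ⟨⟨⟨_, hk⟩, hM⟩, hF⟩ ↦ ⟨hM, hk, hF⟩,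
    fun ⟨hM, hk, hF⟩ ↦ ⟨⟨⟨hM.1, hk⟩, hM⟩, hF⟩⟩

theorem sqfreePow_facetIdealOf {S : Finset (Finset σ)} (hS : ∅ ∉ S) (k : ℕ) :
    sqfreePow K (facetIdealOf K S) k = facetIdealOf K (matchingUnions S k) := by
  apply le_antisymm
  · refine Ideal.span_le.2 ?_
    rintro _ ⟨⟨T, rfl⟩, hT⟩
    obtain ⟨M, hM, hk, hMT⟩ := (xMon_mem_facetIdealOf_pow_iff hS).1 hT
    exact Ideal.mem_of_dvd _ (xMon_dvd_xMon hMT)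
      (Ideal.subset_span ⟨_, mem_matchingUnions.2 ⟨M, hM, hk, rfl⟩, rfl⟩)
  · refine Ideal.span_mono ?_
    rintro _ ⟨T, hT, rfl⟩
    obtain ⟨M, hM, hk, rfl⟩ := mem_matchingUnions.1 hT
    exact ⟨⟨_, rfl⟩, (xMon_mem_facetIdealOf_pow_iff hS).2 ⟨M, hM, hk, subset_rfl⟩⟩

end Matchings

section VertexCovers

variable {σ : Type} {K}

/-- A vertex cover of the facet collection `S`: a set of vertices meeting every facet. -/
def IsVertexCoverOf (S : Finset (Finset σ)) (C : Set σ) : Prop := ∀ F ∈ S, ∃ v ∈ F, v ∈ C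

theorem IsVertexCoverOf.mono {S : Finset (Finset σ)} {C D : Set σ} (hC : IsVertexCoverOf S C)
    (hCD : C ⊆ D) : IsVertexCoverOf S D := fun F hF ↦
  let ⟨v, hvF, hvC⟩ := hC F hF
  ⟨v, hvF, hCD hvC⟩

theorem facetIdealOf_le_iff {S : Finset (Finset σ)} {p : Ideal (MvPolynomial σ K)} [p.IsPrime] :
    facetIdealOf K S ≤ p ↔ IsVertexCoverOf S {v | X v ∈ p} := by
  simp only [facetIdealOf_eq_span_image, Ideal.span_le, Set.image_subset_iff, xMon]
  exact forall₂_congr fun F _ ↦ Ideal.IsPrime.prod_mem_iff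

theorem facetIdealOf_le_varsIdeal_iff {S : Finset (Finset σ)} {C : Set σ} :
    facetIdealOf K S ≤ varsIdeal K C ↔ IsVertexCoverOf S C := by
  simp only [facetIdealOf_le_iff, X_mem_varsIdeal_iff, Set.ofPred_mem_eq]

theorem varsIdeal_le_varsIdeal_iff {C D : Set σ} : varsIdeal K C ≤ varsIdeal K D ↔ C ⊆ D := by
  simp only [varsIdeal, Ideal.span_le, Set.image_subset_iff]
  exact forall₂_congr fun v _ ↦ X_mem_varsIdeal_iff

theorem mem_minimalPrimes_facetIdealOf_iff {S : Finset (Finset σ)}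
    {p : Ideal (MvPolynomial σ K)} :
    p ∈ (facetIdealOf K S).minimalPrimes ↔
      ∃ C, Minimal (IsVertexCoverOf S) C ∧ varsIdeal K C = p := by
  have hle (q : Ideal (MvPolynomial σ K)) : varsIdeal K {v | X v ∈ q} ≤ q :=
    Ideal.span_le.2 (Set.image_subset_iff.2 subset_rfl)
  constructor
  · rintro ⟨⟨hp, hSp⟩, hmin⟩
    have hcover := facetIdealOf_le_iff.1 hSp
    have heq : varsIdeal K {v | X v ∈ p} = p :=
      (hle p).antisymm (hmin ⟨inferInstance, facetIdealOf_le_varsIdeal_iff.2 hcover⟩ (hle p))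
    refine ⟨_, ⟨hcover, fun D hD hDp ↦ ?_⟩, heq⟩
    have := hmin ⟨isPrime_varsIdeal K D, facetIdealOf_le_varsIdeal_iff.2 hD⟩
      ((varsIdeal_le_varsIdeal_iff.2 hDp).trans (hle p))
    exact varsIdeal_le_varsIdeal_iff.1 ((hle p).trans this)
  · rintro ⟨C, hC, rfl⟩
    refine ⟨⟨isPrime_varsIdeal K C, facetIdealOf_le_varsIdeal_iff.2 hC.1⟩, ?_⟩
    rintro q ⟨hq, hSq⟩ hqC
    have hqC' : {v | X v ∈ q} ⊆ C := fun v hv ↦ X_mem_varsIdeal_iff.1 (hqC hv)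
    exact (varsIdeal_le_varsIdeal_iff.2 (hC.2 (facetIdealOf_le_iff.1 hSq) hqC')).trans (hle q)

variable [Finite σ]

theorem unmixed_facetIdealOf_iff {S : Finset (Finset σ)} :
    Unmixed (facetIdealOf K S) ↔ ∀ C D : Set σ, Minimal (IsVertexCoverOf S) C →
      Minimal (IsVertexCoverOf S) D → C.encard = D.encard := by
  have height_eq (C : Set σ) : Order.height (⟨varsIdeal K C, isPrime_varsIdeal K C⟩ :
      PrimeSpectrum (MvPolynomial σ K)) = C.encard := by
    rw [← PrimeSpectrum.height_eq_orderHeight, height_varsIdeal]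
  refine ⟨fun h C D hC hD ↦ ?_, ?_⟩
  · rw [← height_eq, ← height_eq]
    exact h _ _ (mem_minimalPrimes_facetIdealOf_iff.2 ⟨C, hC, rfl⟩)
      (mem_minimalPrimes_facetIdealOf_iff.2 ⟨D, hD, rfl⟩)
  · rintro h ⟨p, _⟩ ⟨q, _⟩ hp hq
    obtain ⟨C, hC, rfl⟩ := mem_minimalPrimes_facetIdealOf_iff.1 hp
    obtain ⟨D, hD, rfl⟩ := mem_minimalPrimes_facetIdealOf_iff.1 hq
    rw [height_eq, height_eq, h C D hC hD]

theorem ncard_compl_le_of_isCMQuot {S : Finset (Finset σ)} (h : IsCMQuot K (facetIdealOf K S))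
    {C D : Set σ} (hC : Minimal (IsVertexCoverOf S) C) (hD : Minimal (IsVertexCoverOf S) D) :
    Cᶜ.ncard ≤ Dᶜ.ncard := by
  have hdim (E : Set σ) : ringKrullDim (MvPolynomial σ K ⧸ varsIdeal K E) = Eᶜ.ncard := by
    rw [ringKrullDim_quotient_varsIdeal, ringKrullDim_eq_zero_of_field, zero_add]
  have hass : varsIdeal K D ∈
      associatedPrimes (MvPolynomial σ K) (MvPolynomial σ K ⧸ facetIdealOf K S) :=
    Module.associatedPrimes.minimalPrimes_annihilator_subset_associatedPrimes _ _ <| by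
      rw [Ideal.annihilator_quotient]
      exact mem_minimalPrimes_facetIdealOf_iff.2 ⟨D, hD, rfl⟩
  have : (Cᶜ.ncard : WithBot ℕ∞) ≤ Dᶜ.ncard :=
    calc (Cᶜ.ncard : WithBot ℕ∞)
        = ringKrullDim (MvPolynomial σ K ⧸ varsIdeal K C) := (hdim C).symm
      _ ≤ ringKrullDim (MvPolynomial σ K ⧸ facetIdealOf K S) :=
        ringKrullDim_le_of_surjective _
          (Ideal.Quotient.factor_surjective (facetIdealOf_le_varsIdeal_iff.2 hC.1))
      _ = gradedDepth K (facetIdealOf K S) := h.symm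
      _ ≤ ringKrullDim (MvPolynomial σ K ⧸ varsIdeal K D) :=
        gradedDepth_le_ringKrullDim_quotient hass (Ideal.span_mono (Set.image_subset_range _ _))
      _ = Dᶜ.ncard := hdim D
  exact_mod_cast this

theorem unmixed_of_isCMQuot {S : Finset (Finset σ)} (h : IsCMQuot K (facetIdealOf K S)) :
    Unmixed (facetIdealOf K S) := by
  refine unmixed_facetIdealOf_iff.2 fun C D hC hD ↦ ?_
  have hcompl : Cᶜ.ncard = Dᶜ.ncard :=
    (ncard_compl_le_of_isCMQuot h hC hD).antisymm (ncard_compl_le_of_isCMQuot h hD hC)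
  have := C.ncard_add_ncard_compl
  have := D.ncard_add_ncard_compl
  rw [← C.toFinite.cast_ncard_eq, ← D.toFinite.cast_ncard_eq]
  congr 1
  omega

end VertexCovers

/-- The edges of the triangle `x₁x₂x₃` with a whisker `xᵢyᵢ` at each vertex, where `x₁, x₂, x₃` are
numbered `0, 1, 2` and `y₁, y₂, y₃` are numbered `3, 4, 5`. -/
def whiskeredTriangle : Finset (Finset (Fin 6)) := {{0, 1}, {1, 2}, {0, 2}, {0, 3}, {1, 4}, {2, 5}}

theorem matchingUnions_whiskeredTriangle_two : matchingUnions whiskeredTriangle 2 =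
    {{0, 3, 2, 5}, {0, 3, 1, 2}, {0, 3, 1, 4}, {2, 5, 1, 4}, {2, 5, 0, 1}, {1, 4, 0, 2}} := by
  decide

theorem facetIdealOf_whiskeredTriangle : facetIdealOf K whiskeredTriangle =
    Ideal.span {X 0 * X 1, X 1 * X 2, X 0 * X 2, X 0 * X 3, X 1 * X 4, X 2 * X 5} := by
  simp [facetIdealOf_eq_span_image, whiskeredTriangle, Set.image_insert_eq, xMon]

theorem facetIdealOf_matchingUnions_whiskeredTriangle_two :
    facetIdealOf K (matchingUnions whiskeredTriangle 2) =
      Ideal.span {X 0 * X 3 * (X 2 * X 5), X 0 * X 3 * (X 1 * X 2), X 0 * X 3 * (X 1 * X 4),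
        X 2 * X 5 * (X 1 * X 4), X 2 * X 5 * (X 0 * X 1), X 1 * X 4 * (X 0 * X 2)} := by
  rw [matchingUnions_whiskeredTriangle_two]
  simp [facetIdealOf_eq_span_image, Set.image_insert_eq, xMon, mul_assoc]

theorem minimal_isVertexCoverOf_zero_one :
    Minimal (IsVertexCoverOf (matchingUnions whiskeredTriangle 2)) {0, 1} := by
  rw [matchingUnions_whiskeredTriangle_two,
    Set.minimal_iff_forall_sdiff_singleton fun _ _ ↦ IsVertexCoverOf.mono]
  simp [IsVertexCoverOf]

theorem minimal_isVertexCoverOf_three_four_five :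
    Minimal (IsVertexCoverOf (matchingUnions whiskeredTriangle 2)) {3, 4, 5} := by
  rw [matchingUnions_whiskeredTriangle_two,
    Set.minimal_iff_forall_sdiff_singleton fun _ _ ↦ IsVertexCoverOf.mono]
  simp [IsVertexCoverOf]

theorem stmt18 (I : Ideal (MvPolynomial (Fin 6) K))
    (hI : I = Ideal.span {X 0 * X 1, X 1 * X 2, X 0 * X 2,
        X 0 * X 3, X 1 * X 4, X 2 * X 5}) :
    sqfreePow K I 2 = Ideal.span {X 0 * X 3 * (X 2 * X 5), X 0 * X 3 * (X 1 * X 2),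
        X 0 * X 3 * (X 1 * X 4), X 2 * X 5 * (X 1 * X 4), X 2 * X 5 * (X 0 * X 1),
        X 1 * X 4 * (X 0 * X 2)} ∧
    Ideal.span {(X 0 : MvPolynomial (Fin 6) K), X 1} ∈ (sqfreePow K I 2).minimalPrimes ∧
    Ideal.span {(X 3 : MvPolynomial (Fin 6) K), X 4, X 5} ∈ (sqfreePow K I 2).minimalPrimes ∧
    ¬ Unmixed (sqfreePow K I 2) ∧
    ¬ IsCMQuot K (sqfreePow K I 2) := by
  obtain rfl : I = facetIdealOf K whiskeredTriangle :=
    hI.trans (facetIdealOf_whiskeredTriangle K).symm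
  have hsq : sqfreePow K (facetIdealOf K whiskeredTriangle) 2 =
      facetIdealOf K (matchingUnions whiskeredTriangle 2) := sqfreePow_facetIdealOf (by decide) 2
  have hcard : ({0, 1} : Set (Fin 6)).encard ≠ ({3, 4, 5} : Set (Fin 6)).encard := by
    rw [Set.encard_pair (by decide), Set.encard_insert_of_notMem (by simp),
      Set.encard_pair (by decide)]
    norm_num
  have hmixed : ¬ Unmixed (facetIdealOf K (matchingUnions whiskeredTriangle 2)) := fun h ↦
    hcard <| unmixed_facetIdealOf_iff.1 h _ _ minimal_isVertexCoverOf_zero_one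
      minimal_isVertexCoverOf_three_four_five
  rw [hsq]
  refine ⟨facetIdealOf_matchingUnions_whiskeredTriangle_two K,
    mem_minimalPrimes_facetIdealOf_iff.2 ⟨_, minimal_isVertexCoverOf_zero_one, ?_⟩,
    mem_minimalPrimes_facetIdealOf_iff.2 ⟨_, minimal_isVertexCoverOf_three_four_five, ?_⟩,
    hmixed, fun h ↦ hmixed (unmixed_of_isCMQuot h)⟩ <;>
  simp only [varsIdeal, Set.image_insert_eq, Set.image_singleton]

end Statements
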